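/- The one-dimensional functions h_j(y) := p̂_j^3(2y−1) − (1−y) p_{j−1}^3(2y−1), j ≥ 1, are orthogonal with respect to the weight (1−y) on (0,1): for all j, m ≥ 1 there exists a positive real c_j such that ∫_{0}^{1} (1−y) h_j(y) h_m(y) dy = c_j δ_{jm}. -/

import Mathlib

open MeasureTheory

/-- Jacobi polynomial with parameters `(α, 0)`, via the Rodrigues formula. -/
noncomputable def jacobiP (α : ℝ) (n : ℕ) (x : ℝ) : ℝ :=
  1 / (2 ^ n * (n.factorial : ℝ) * (1 - x) ^ α) *
    iteratedDeriv n (fun t : ℝ => (1 - t) ^ α * (t ^ 2 - 1) ^ n) x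

/-- Integrated Jacobi polynomial `p̂_n^α`. -/
noncomputable def jacobiPhat (α : ℝ) (n : ℕ) (x : ℝ) : ℝ :=
  if n = 0 then 1 else ∫ ξ in (-1 : ℝ)..x, jacobiP α (n - 1) ξ

/-- The function `h_j(y) = p̂_j^3(2y-1) - (1-y) p_{j-1}^3(2y-1)`. -/
noncomputable def hFun (j : ℕ) (y : ℝ) : ℝ :=
  jacobiPhat 3 j (2 * y - 1) - (1 - y) * jacobiP 3 (j - 1) (2 * y - 1)


/-!
Write `p̂_j = p̂_j³` and `p_j = p_j³`, so that `p̂_j' = p_{j-1}`. In the variable `x = 2y - 1`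
the function `h_j` is `g_j = p̂_j - (1 - x)/2 p̂_j'`. Since
`(1 - x) p̂_j p̂_m - (1 - x)²/2 (p̂_j p̂_m)'` is the derivative of `-(1 - x)²/2 p̂_j p̂_m`, which
vanishes at `±1`, expanding the product gives
`∫ (1 - x) g_j g_m = 1/4 ∫ (1 - x)³ p_{j-1} p_{m-1}`. This reduces the claim to the orthogonality
of the Jacobi polynomials for the weight `(1 - x)³`, which follows from the Rodrigues formula by
repeated integration by parts.
-/

section

open Polynomial Set

section PolynomialCalculus

theorem iteratedDeriv_eval (p : ℝ[X]) (n : ℕ) :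
    iteratedDeriv n (fun x => p.eval x) = fun x => (derivative^[n] p).eval x := by
  induction n with
  | zero => simp
  | succ n ih =>
    rw [iteratedDeriv_succ, ih, Function.iterate_succ_apply']
    exact funext fun x => Polynomial.deriv _

theorem natDegree_iterate_derivative_eq {R : Type*} [Semiring R] [IsAddTorsionFree R]
    (p : R[X]) (n : ℕ) : (derivative^[n] p).natDegree = p.natDegree - n := by
  induction n with
  | zero => simp
  | succ n ih => rw [Function.iterate_succ_apply', natDegree_derivative, ih, Nat.sub_sub]

theorem iterate_derivative_ne_zero {R : Type*} [Semiring R] [IsAddTorsionFree R]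
    {p : R[X]} (hp : p ≠ 0) {n : ℕ} (hn : n ≤ p.natDegree) : derivative^[n] p ≠ 0 := by
  cases n with
  | zero => exact hp
  | succ n =>
    rw [Function.iterate_succ_apply', derivative_ne_zero, natDegree_iterate_derivative_eq]
    omega

variable {a b : ℝ}

theorem integral_eval_derivative_mul_eval {F : ℝ[X]} (ha : F.IsRoot a) (hb : F.IsRoot b)
    (R : ℝ[X]) :
    ∫ x in a..b, (derivative F).eval x * R.eval x
      = -∫ x in a..b, F.eval x * (derivative R).eval x := by
  have by_parts := intervalIntegral.integral_mul_deriv_eq_deriv_mul (a := a) (b := b)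
    (fun x _ => F.hasDerivAt x) (fun x _ => R.hasDerivAt x)
    ((derivative F).continuous.intervalIntegrable _ _)
    ((derivative R).continuous.intervalIntegrable _ _)
  rw [ha.eq_zero, hb.eq_zero] at by_parts
  linarith

theorem integral_eval_iterate_derivative_mul_eval {F : ℝ[X]} {n : ℕ}
    (ha : (X - C a) ^ n ∣ F) (hb : (X - C b) ^ n ∣ F) (R : ℝ[X]) :
    ∫ x in a..b, (derivative^[n] F).eval x * R.eval x
      = (-1) ^ n * ∫ x in a..b, F.eval x * (derivative^[n] R).eval x := by
  induction n generalizing F with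
  | zero => simp
  | succ n ih =>
    have hroot {c : ℝ} (hc : (X - C c) ^ (n + 1) ∣ F) : F.IsRoot c :=
      dvd_iff_isRoot.mp ((dvd_pow_self _ n.succ_ne_zero).trans hc)
    have hderiv {c : ℝ} (hc : (X - C c) ^ (n + 1) ∣ F) : (X - C c) ^ n ∣ derivative F := by
      simpa only [Nat.add_sub_cancel] using pow_sub_one_dvd_derivative_of_pow_dvd hc
    rw [Function.iterate_succ_apply, ih (hderiv ha) (hderiv hb),
      integral_eval_derivative_mul_eval (hroot ha) (hroot hb),
      ← Function.iterate_succ_apply' derivative]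
    ring

theorem integral_sub_pow_mul_eval_sq_pos (hab : a < b) (k : ℕ) {p : ℝ[X]} (hp : p ≠ 0) :
    0 < ∫ x in a..b, (b - x) ^ k * p.eval x ^ 2 := by
  obtain ⟨c, hc, hpc⟩ : ∃ c ∈ Ioo a b, p.eval c ≠ 0 := by
    by_contra! hroot
    exact hp (p.eq_zero_of_infinite_isRoot ((Ioo_infinite hab).mono hroot))
  refine intervalIntegral.integral_pos hab (by fun_prop) (fun x hx => ?_)
    ⟨c, Ioo_subset_Icc_self hc, ?_⟩
  · have := sub_nonneg.mpr hx.2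
    positivity
  · have := sub_pos.mpr hc.2
    positivity

end PolynomialCalculus

theorem integral_sub_pow_mul_sub_deriv_mul_sub_deriv {a b : ℝ} {f f' g g' : ℝ → ℝ} (k : ℕ)
    (hf : ∀ x ∈ uIcc a b, HasDerivAt f (f' x) x) (hg : ∀ x ∈ uIcc a b, HasDerivAt g (g' x) x)
    (hf' : ContinuousOn f' (uIcc a b)) (hg' : ContinuousOn g' (uIcc a b)) (hfg : f a * g a = 0) :
    ∫ x in a..b, (b - x) ^ k * (f x - (b - x) / (k + 1) * f' x) * (g x - (b - x) / (k + 1) * g' x)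
      = 1 / (k + 1) ^ 2 * ∫ x in a..b, (b - x) ^ (k + 2) * f' x * g' x := by
  have hfc : ContinuousOn f (uIcc a b) := HasDerivAt.continuousOn hf
  have hgc : ContinuousOn g (uIcc a b) := HasDerivAt.continuousOn hg
  have hprim : ∀ x ∈ uIcc a b, HasDerivAt (fun x => -((b - x) ^ (k + 1) / (k + 1)) * (f x * g x))
      ((b - x) ^ k * (f x - (b - x) / (k + 1) * f' x) * (g x - (b - x) / (k + 1) * g' x)
        - 1 / (k + 1) ^ 2 * ((b - x) ^ (k + 2) * f' x * g' x)) x := by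
    intro x hx
    have hpow := (((hasDerivAt_id x).const_sub b).pow (k + 1)).div_const (k + 1 : ℝ)
    refine (hpow.neg.mul ((hf x hx).mul (hg x hx))).congr_deriv ?_
    simp only [id, Pi.neg_apply, Pi.mul_apply, Pi.pow_apply, Nat.add_sub_cancel, Nat.cast_add,
      Nat.cast_one]
    field_simp
    ring
  rw [← intervalIntegral.integral_const_mul, ← sub_eq_zero, ← intervalIntegral.integral_sub
    (ContinuousOn.intervalIntegrable (by fun_prop)) (ContinuousOn.intervalIntegrable (by fun_prop)),
    intervalIntegral.integral_eq_sub_of_hasDerivAt hprim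
      (ContinuousOn.intervalIntegrable (by fun_prop))]
  simp [hfg]

section JacobiPolynomial

/-- The polynomial `(1 - X)ᵃ (X² - 1)ⁿ`, whose `n`-th derivative appears in the Rodrigues
formula. -/
noncomputable def rodriguesPoly (a n : ℕ) : ℝ[X] :=
  (1 - X) ^ a * (X ^ 2 - 1) ^ n

/-- The Jacobi polynomial with parameters `(a, 0)` for a natural number `a`, as a formal polynomial.
The division is exact, and `jacobiP` agrees with it away from `x = 1`. -/
noncomputable def jacobiPoly (a n : ℕ) : ℝ[X] :=
  C (1 / (2 ^ n * (n.factorial : ℝ))) * (derivative^[n] (rodriguesPoly a n) / (1 - X) ^ a)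

variable (a n : ℕ)

theorem natDegree_one_sub_X : (1 - X : ℝ[X]).natDegree = 1 := by
  compute_degree!

theorem one_sub_X_pow_ne_zero : (1 - X : ℝ[X]) ^ a ≠ 0 :=
  pow_ne_zero a (ne_zero_of_natDegree_gt (natDegree_one_sub_X.symm ▸ one_pos))

theorem rodriguesPoly_ne_zero : rodriguesPoly a n ≠ 0 :=
  mul_ne_zero (one_sub_X_pow_ne_zero a) (pow_ne_zero n (X_pow_sub_C_ne_zero two_pos 1))

theorem natDegree_rodriguesPoly : (rodriguesPoly a n).natDegree = a + 2 * n := by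
  have natDegree_X_sq_sub_one : (X ^ 2 - 1 : ℝ[X]).natDegree = 2 := by compute_degree!
  rw [rodriguesPoly, natDegree_mul (left_ne_zero_of_mul (rodriguesPoly_ne_zero a n))
    (right_ne_zero_of_mul (rodriguesPoly_ne_zero a n)), natDegree_pow, natDegree_pow,
    natDegree_one_sub_X, natDegree_X_sq_sub_one, mul_one, mul_comm n]

theorem X_sub_one_pow_dvd_rodriguesPoly : (X - C 1) ^ n ∣ rodriguesPoly a n :=
  (pow_dvd_pow_of_dvd ⟨X + 1, by rw [C_1]; ring⟩ n).mul_left _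

theorem X_add_one_pow_dvd_rodriguesPoly : (X - C (-1)) ^ n ∣ rodriguesPoly a n :=
  (pow_dvd_pow_of_dvd ⟨X - 1, by rw [C_neg, C_1]; ring⟩ n).mul_left _

theorem one_sub_X_pow_dvd_iterate_derivative_rodriguesPoly :
    (1 - X) ^ a ∣ derivative^[n] (rodriguesPoly a n) := by
  have hdvd : (1 - X) ^ (a + n) ∣ rodriguesPoly a n := by
    rw [pow_add]
    exact mul_dvd_mul_left _ (pow_dvd_pow_of_dvd ⟨-(X + 1), by ring⟩ n)
  simpa using pow_sub_dvd_iterate_derivative_of_pow_dvd n hdvd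

theorem one_sub_X_pow_mul_jacobiPoly :
    (1 - X) ^ a * jacobiPoly a n
      = C (1 / (2 ^ n * (n.factorial : ℝ))) * derivative^[n] (rodriguesPoly a n) := by
  rw [jacobiPoly, mul_left_comm, EuclideanDomain.mul_div_cancel' (one_sub_X_pow_ne_zero a)
    (one_sub_X_pow_dvd_iterate_derivative_rodriguesPoly a n)]

theorem jacobiPoly_ne_zero : jacobiPoly a n ≠ 0 := by
  have hD : derivative^[n] (rodriguesPoly a n) ≠ 0 :=
    iterate_derivative_ne_zero (rodriguesPoly_ne_zero a n) (by rw [natDegree_rodriguesPoly]; omega)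
  refine right_ne_zero_of_mul (a := (1 - X) ^ a) ?_
  rw [one_sub_X_pow_mul_jacobiPoly]
  exact mul_ne_zero (C_ne_zero.mpr (by positivity)) hD

theorem natDegree_jacobiPoly : (jacobiPoly a n).natDegree = n := by
  have hdeg := congrArg natDegree (one_sub_X_pow_mul_jacobiPoly a n)
  rw [natDegree_mul (one_sub_X_pow_ne_zero a) (jacobiPoly_ne_zero a n), natDegree_pow,
    natDegree_one_sub_X, natDegree_C_mul (by positivity), natDegree_iterate_derivative_eq,
    natDegree_rodriguesPoly] at hdeg
  omega

variable {n} in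
theorem integral_one_sub_pow_mul_jacobiPoly_mul_of_natDegree_lt {R : ℝ[X]} (hR : R.natDegree < n) :
    ∫ x in (-1 : ℝ)..1, (1 - x) ^ a * (jacobiPoly a n).eval x * R.eval x = 0 := by
  have hrodrigues (x : ℝ) : (1 - x) ^ a * (jacobiPoly a n).eval x
      = 1 / (2 ^ n * (n.factorial : ℝ)) * (derivative^[n] (rodriguesPoly a n)).eval x := by
    simpa using congrArg (eval x) (one_sub_X_pow_mul_jacobiPoly a n)
  simp only [hrodrigues, mul_assoc, intervalIntegral.integral_const_mul]
  rw [integral_eval_iterate_derivative_mul_eval (X_add_one_pow_dvd_rodriguesPoly a n)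
    (X_sub_one_pow_dvd_rodriguesPoly a n), iterate_derivative_eq_zero hR]
  simp

theorem integral_one_sub_pow_mul_jacobiPoly_mul_jacobiPoly_of_ne {j m : ℕ} (hjm : j ≠ m) :
    ∫ x in (-1 : ℝ)..1, (1 - x) ^ a * (jacobiPoly a j).eval x * (jacobiPoly a m).eval x = 0 := by
  wlog hlt : m < j generalizing j m
  · simpa only [mul_right_comm] using this hjm.symm (by omega)
  exact integral_one_sub_pow_mul_jacobiPoly_mul_of_natDegree_lt a
    (by rwa [natDegree_jacobiPoly])

theorem integral_one_sub_pow_mul_jacobiPoly_mul_self_pos :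
    0 < ∫ x in (-1 : ℝ)..1, (1 - x) ^ a * (jacobiPoly a n).eval x * (jacobiPoly a n).eval x := by
  simpa only [sq, mul_assoc] using
    integral_sub_pow_mul_eval_sq_pos (by norm_num : (-1 : ℝ) < 1) a (jacobiPoly_ne_zero a n)

variable {x : ℝ}

theorem jacobiP_eq_eval_jacobiPoly (hx : x ≠ 1) : jacobiP a n x = (jacobiPoly a n).eval x := by
  have hx' : (1 - x) ^ a ≠ 0 := pow_ne_zero a (sub_ne_zero.mpr hx.symm)
  have hrod : (fun t : ℝ => (1 - t) ^ (a : ℝ) * (t ^ 2 - 1) ^ n)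
      = fun t => (rodriguesPoly a n).eval t := by
    simp [rodriguesPoly]
  have hmul := congrArg (eval x) (one_sub_X_pow_mul_jacobiPoly a n)
  simp only [eval_mul, eval_pow, eval_sub, eval_one, eval_X, eval_C] at hmul
  rw [jacobiP, hrod, iteratedDeriv_eval, Real.rpow_natCast, ← mul_right_inj' hx', hmul]
  field_simp

theorem jacobiPhat_succ_eq_integral :
    jacobiPhat a (n + 1) x = ∫ t in (-1 : ℝ)..x, (jacobiPoly a n).eval t := by
  rw [jacobiPhat, if_neg n.succ_ne_zero, Nat.add_sub_cancel]
  refine intervalIntegral.integral_congr_ae ?_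
  filter_upwards [Measure.ae_ne volume (1 : ℝ)] with t ht _ using jacobiP_eq_eval_jacobiPoly a n ht

theorem hasDerivAt_jacobiPhat_succ :
    HasDerivAt (jacobiPhat a (n + 1)) ((jacobiPoly a n).eval x) x := by
  rw [funext fun x => jacobiPhat_succ_eq_integral a n (x := x)]
  exact ((jacobiPoly a n).continuous.integral_hasStrictDerivAt (-1) x).hasDerivAt

theorem integral_one_sub_pow_mul_jacobiPhat_sub_mul_jacobiPhat_sub (k j m : ℕ) :
    ∫ x in (-1 : ℝ)..1, (1 - x) ^ k
        * (jacobiPhat a (j + 1) x - (1 - x) / (k + 1) * (jacobiPoly a j).eval x)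
        * (jacobiPhat a (m + 1) x - (1 - x) / (k + 1) * (jacobiPoly a m).eval x)
      = 1 / (k + 1) ^ 2 * ∫ x in (-1 : ℝ)..1,
          (1 - x) ^ (k + 2) * (jacobiPoly a j).eval x * (jacobiPoly a m).eval x :=
  integral_sub_pow_mul_sub_deriv_mul_sub_deriv k
    (fun _ _ => hasDerivAt_jacobiPhat_succ a j) (fun _ _ => hasDerivAt_jacobiPhat_succ a m)
    (jacobiPoly a j).continuousOn (jacobiPoly a m).continuousOn (by simp [jacobiPhat])

end JacobiPolynomial

theorem hFun_succ_eq (n : ℕ) {y : ℝ} (hy : y ≠ 1) :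
    hFun (n + 1) y = jacobiPhat (3 : ℕ) (n + 1) (2 * y - 1)
      - (1 - (2 * y - 1)) / 2 * (jacobiPoly 3 n).eval (2 * y - 1) := by
  have hne : 2 * y - 1 ≠ 1 := fun h => hy (by linarith)
  rw [← jacobiP_eq_eval_jacobiPoly 3 n hne, hFun, Nat.add_sub_cancel, Nat.cast_ofNat]
  ring

theorem integral_one_sub_mul_hFun_mul_hFun (j m : ℕ) :
    ∫ y in (0 : ℝ)..1, (1 - y) * hFun (j + 1) y * hFun (m + 1) y
      = 1 / 16 * ∫ x in (-1 : ℝ)..1,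
          (1 - x) ^ 3 * (jacobiPoly 3 j).eval x * (jacobiPoly 3 m).eval x := by
  let g (n : ℕ) (x : ℝ) : ℝ :=
    jacobiPhat (3 : ℕ) (n + 1) x - (1 - x) / 2 * (jacobiPoly 3 n).eval x
  have hparts : ∫ x in (-1 : ℝ)..1, (1 - x) * g j x * g m x
      = 1 / 4 * ∫ x in (-1 : ℝ)..1,
          (1 - x) ^ 3 * (jacobiPoly 3 j).eval x * (jacobiPoly 3 m).eval x := by
    have := integral_one_sub_pow_mul_jacobiPhat_sub_mul_jacobiPhat_sub 3 1 j m
    norm_num only [pow_one, Nat.cast_one] at this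
    exact this
  calc ∫ y in (0 : ℝ)..1, (1 - y) * hFun (j + 1) y * hFun (m + 1) y
      = ∫ y in (0 : ℝ)..1, (fun x => 1 / 2 * ((1 - x) * g j x * g m x)) (2 * y - 1) :=
        intervalIntegral.integral_congr_Ioo_of_le zero_le_one fun y hy => by
          simp only [hFun_succ_eq _ hy.2.ne, g]
          ring
    _ = 2⁻¹ * ∫ x in (-1 : ℝ)..1, 1 / 2 * ((1 - x) * g j x * g m x) := by
        rw [intervalIntegral.integral_comp_mul_sub (fun x => 1 / 2 * ((1 - x) * g j x * g m x))
          two_ne_zero, smul_eq_mul]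
        norm_num
    _ = 1 / 16 * ∫ x in (-1 : ℝ)..1,
          (1 - x) ^ 3 * (jacobiPoly 3 j).eval x * (jacobiPoly 3 m).eval x := by
        rw [intervalIntegral.integral_const_mul, hparts]
        ring

end

/-- The functions `h_j`, `j ≥ 1`, are orthogonal on `(0,1)` with respect to the
weight `1 - y`. -/
theorem hFun_orthogonal :
    ∃ c : ℕ → ℝ, (∀ j, 0 < c j) ∧ ∀ j m : ℕ, 1 ≤ j → 1 ≤ m →
      ∫ y in (0 : ℝ)..1, (1 - y) * hFun j y * hFun m y
        = c j * (if j = m then 1 else 0) := by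
  refine ⟨fun j => 1 / 16 * ∫ x in (-1 : ℝ)..1,
      (1 - x) ^ 3 * (jacobiPoly 3 (j - 1)).eval x * (jacobiPoly 3 (j - 1)).eval x,
    fun j => mul_pos (by norm_num) (integral_one_sub_pow_mul_jacobiPoly_mul_self_pos 3 _), ?_⟩
  intro j m hj hm
  obtain ⟨j, rfl⟩ := Nat.exists_eq_add_of_le' hj
  obtain ⟨m, rfl⟩ := Nat.exists_eq_add_of_le' hm
  rw [integral_one_sub_mul_hFun_mul_hFun]
  rcases eq_or_ne j m with rfl | hjm
  · simp
  · rw [integral_one_sub_pow_mul_jacobiPoly_mul_jacobiPoly_of_ne 3 hjm, if_neg (by omega)]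
    simp
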